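/- Let Δ assign to every finite vector with nonnegative entries (of any length) a real number Δ(p), invariantly under permuting entries and under appending zero entries, such that Δ(p ⊕ q) = Δ(p) + Δ(q) for all p, q, and such that Δ is monotone: whenever p ≽₀,₁ q, then Δ(p) ≤ Δ(q). (i) If Δ satisfies the Leibniz rule Δ(p ⊗ q) = Δ(p)·‖q‖₁ + ‖p‖₁·Δ(q) for all p, q, then there exists c ≥ 0 such that Δ(p) = c·H₁(p) for every p with ‖p‖₁ ∈ ℚ; conversely, for every c ≥ 0 the map c·H₁ has all of these properties. (ii) If instead Δ satisfies the Leibniz rule Δ(p ⊗ q) = Δ(p)·‖q‖₀ + ‖p‖₀·Δ(q) for all p, q, then there exists c ≥ 0 such that Δ(p) = c·H'₀(p) for every p with ‖p‖₁ ∈ ℚ; conversely, for every c ≥ 0 the map c·H'₀ has all of these properties. -/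

import Mathlib

open scoped BigOperators NNReal

noncomputable section

/-- A probability vector on a finite index type. -/
def IsProbVec {ι : Type*} [Fintype ι] (p : ι → ℝ) : Prop :=
  (∀ i, 0 ≤ p i) ∧ ∑ i, p i = 1

/-- A (column-)stochastic matrix: nonnegative entries, every column sums to `1`. -/
def IsStochastic {ι κ : Type*} [Fintype ι] [Fintype κ] (T : ι → κ → ℝ) : Prop :=
  (∀ i j, 0 ≤ T i j) ∧ ∀ j, ∑ i, T i j = 1

/-- Matrix–vector multiplication. -/
def matVec {ι κ : Type*} [Fintype κ] (T : ι → κ → ℝ) (v : κ → ℝ) : ι → ℝ :=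
  fun i => ∑ j, T i j * v j

/-- Kronecker product of two vectors. -/
def kron {ι κ : Type*} (p : ι → ℝ) (q : κ → ℝ) : ι × κ → ℝ :=
  fun x => p x.1 * q x.2

/-- `n`-fold Kronecker power of a vector. -/
def kpow {ι : Type*} (p : ι → ℝ) (n : ℕ) : (Fin n → ι) → ℝ :=
  fun f => ∏ j, p (f j)

/-- Kronecker product reindexed along `Fin (m * n)`. -/
def kronFin {m n : ℕ} (p : Fin m → ℝ) (q : Fin n → ℝ) : Fin (m * n) → ℝ :=
  fun i => kron p q (finProdFinEquiv.symm i)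

/-- The sum of the `k` largest entries of a nonnegative vector, expressed as the
largest sum over subsets of cardinality at most `k`. -/
def topSum {ι : Type*} [Fintype ι] (p : ι → ℝ) (k : ℕ) : ℝ :=
  ⨆ s ∈ {s : Finset ι | s.card ≤ k}, ∑ i ∈ s, p i

/-- Majorization for nonnegative vectors (possibly of different lengths):
equal total sums, and for each `k` the sum of the `k` largest entries of `p` is
at least that of `q`. -/
def Majorizes {ι κ : Type*} [Fintype ι] [Fintype κ] (p : ι → ℝ) (q : κ → ℝ) : Prop :=
  (∑ i, p i = ∑ j, q j) ∧ ∀ k : ℕ, topSum q k ≤ topSum p k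

/-- The size of the support, `‖p‖₀`. -/
def supp0 {ι : Type*} [Fintype ι] (p : ι → ℝ) : ℕ :=
  (Finset.univ.filter fun i => p i ≠ 0).card

/-- Entrywise nonnegativity. -/
def NonnegVec {n : ℕ} (p : Fin n → ℝ) : Prop := ∀ i, 0 ≤ p i

/-- The modified majorization preorder `≽₀,₁`: majorization plus equality of
support sizes. -/
def MajMod {ι κ : Type*} [Fintype ι] [Fintype κ] (p : ι → ℝ) (q : κ → ℝ) : Prop :=
  Majorizes p q ∧ supp0 p = supp0 q

/-- `f_α(p) = ∑_{i ∈ supp p} (p i)^α`. -/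
def fA {ι : Type*} [Fintype ι] (α : ℝ) (p : ι → ℝ) : ℝ :=
  ∑ i, if p i = 0 then 0 else p i ^ α

/-- Shannon entropy (the terms with `p i = 0` vanish). -/
def H1ent {ι : Type*} [Fintype ι] (p : ι → ℝ) : ℝ := -∑ i, p i * Real.log (p i)

/-- `H₀'(p) = ∑_{i ∈ supp p} log p_i`. -/
def H0' {ι : Type*} [Fintype ι] (p : ι → ℝ) : ℝ :=
  ∑ i, if p i = 0 then 0 else Real.log (p i)

/-- Rényi entropy of order `α` (with `α = 1` the Shannon entropy). -/
def Hent {ι : Type*} [Fintype ι] (α : ℝ) (p : ι → ℝ) : ℝ :=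
  if α = 1 then -∑ i, p i * Real.log (p i)
  else (1 / (1 - α)) * Real.log (∑ i, if p i = 0 then 0 else p i ^ α)

/-- Min-entropy `H_∞(p) = - log max_i p_i`. -/
def HentInf {ι : Type*} [Fintype ι] (p : ι → ℝ) : ℝ := -Real.log (⨆ i, p i)

/-- Kullback–Leibler divergence (the terms with `p i = 0` vanish). -/
def KL {n : ℕ} (p q : Fin n → ℝ) : ℝ :=
  ∑ i, p i * Real.log (p i / q i)

/-- Rényi divergence of order `α` for vectors with common support. -/
def Renyi {n : ℕ} (α : ℝ) (p q : Fin n → ℝ) : ℝ :=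
  if α = 1 then ∑ i, p i * Real.log (p i / q i)
  else (1 / (α - 1)) * Real.log (∑ i, if p i = 0 then 0 else p i ^ α * q i ^ (1 - α))

/-- Max-divergence `D_∞(p‖q) = max_{i ∈ supp q} log (p_i / q_i)`. -/
def RenyiInf {n : ℕ} (p q : Fin n → ℝ) : ℝ :=
  ⨆ i ∈ Finset.univ.filter (fun i => q i ≠ 0), Real.log (p i / q i)

/-- Rényi divergence with values in the extended reals `[0, ∞]`. -/
def RenyiE {n : ℕ} (α : ℝ) (p q : Fin n → ℝ) : EReal :=
  if α = 1 then
    (if ∀ i, p i ≠ 0 → q i ≠ 0 then ((∑ i, p i * Real.log (p i / q i) : ℝ) : EReal) else ⊤)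
  else if α < 1 then
    (if ∃ i, p i ≠ 0 ∧ q i ≠ 0 then
      (((1 / (α - 1)) *
        Real.log (∑ i, if p i = 0 ∨ q i = 0 then 0 else p i ^ α * q i ^ (1 - α)) : ℝ) : EReal)
    else (⊤ : EReal))
  else
    (if ∀ i, p i ≠ 0 → q i ≠ 0 then
      (((1 / (α - 1)) *
        Real.log (∑ i, if p i = 0 then 0 else p i ^ α * q i ^ (1 - α)) : ℝ) : EReal)
    else (⊤ : EReal))

/-- The common support of a tuple of vectors. -/
def suppIdx {d n : ℕ} (P : Fin d → Fin n → ℝ) : Finset (Fin n) :=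
  Finset.univ.filter fun i => ∃ k, P k i ≠ 0

/-- `f_α(P) = ∑_{i ∈ I} ∏_k (p_i^{(k)})^{α_k}` with `I` the common support. -/
def fMat {d n : ℕ} (α : Fin d → ℝ) (P : Fin d → Fin n → ℝ) : ℝ :=
  ∑ i ∈ suppIdx P, ∏ k, P k i ^ α k

/-- The matrix `α`-divergence `D_α`. -/
def Dmat {d n : ℕ} (α : Fin d → ℝ) (P : Fin d → Fin n → ℝ) : ℝ :=
  (1 / ((⨆ k, α k) - 1)) * Real.log (∑ i ∈ suppIdx P, ∏ k, P k i ^ α k)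

/-- The tropical matrix divergence `D^𝕋_β`. -/
def DmatT {d n : ℕ} (β : Fin d → ℝ) (P : Fin d → Fin n → ℝ) : ℝ :=
  (1 / (⨆ k, β k)) * Real.log (⨆ i ∈ suppIdx P, ∏ k, P k i ^ β k)

/-- Membership in `A₊`: entries summing to `1`, all nonnegative. -/
def memAplus {d : ℕ} (α : Fin d → ℝ) : Prop := (∑ k, α k = 1) ∧ ∀ k, 0 ≤ α k

/-- Membership in `A₋`: entries summing to `1`, one entry `≥ 1`, the others `≤ 0`. -/
def memAminus {d : ℕ} (α : Fin d → ℝ) : Prop :=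
  (∑ k, α k = 1) ∧ ∃ k, 1 ≤ α k ∧ ∀ l, l ≠ k → α l ≤ 0

/-- Membership in `B₋`: entries summing to `0`, one entry `≥ 0`, the others `≤ 0`. -/
def memBminus {d : ℕ} (β : Fin d → ℝ) : Prop :=
  (∑ k, β k = 0) ∧ ∃ k, 0 ≤ β k ∧ ∀ l, l ≠ k → β l ≤ 0

/-- `α` is none of the standard basis vectors `e₁, …, e_d`. -/
def notBasis {d : ℕ} (α : Fin d → ℝ) : Prop := ∀ k, α ≠ Pi.single k 1

/-- ℓ¹-distance of two vectors, padding with zeros to a common length. -/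
def l1PadDist {m n : ℕ} (p : Fin m → ℝ) (q : Fin n → ℝ) : ℝ :=
  ∑ i : Fin (max m n),
    |(if h : (i : ℕ) < m then p ⟨(i : ℕ), h⟩ else 0) -
      (if h : (i : ℕ) < n then q ⟨(i : ℕ), h⟩ else 0)|

/-- Index type of the direct sum `⨁_{s=0}^{n-1} p^{⊗(n-1-s)} ⊗ q^{⊗s}`. -/
abbrev TrickIdx (m m' n : ℕ) : Type :=
  Σ s : Fin n, (Fin (n - 1 - (s : ℕ)) → Fin m) × (Fin (s : ℕ) → Fin m')

/-- The standard catalyst `(1/n) ⨁_{s=0}^{n-1} p^{⊗(n-1-s)} ⊗ q^{⊗s}`. -/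
def trick {m m' : ℕ} (p : Fin m → ℝ) (q : Fin m' → ℝ) (n : ℕ) : TrickIdx m m' n → ℝ :=
  fun x => (1 / (n : ℝ)) * (kpow p (n - 1 - (x.1 : ℕ)) x.2.1 * kpow q (x.1 : ℕ) x.2.2)

/-- A valid tuple: nonnegative entries and common support across the tuple. -/
def TupOK {d n : ℕ} (P : Fin d → Fin n → ℝ) : Prop :=
  (∀ k i, 0 ≤ P k i) ∧ ∀ k l i, P k i ≠ 0 ↔ P l i ≠ 0

/-- Matrix majorization of tuples: a single stochastic matrix carrying each column
of `P` to the corresponding column of `Q`. -/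
def TupMaj {d m n : ℕ} (P : Fin d → Fin m → ℝ) (Q : Fin d → Fin n → ℝ) : Prop :=
  ∃ T : Fin n → Fin m → ℝ, IsStochastic T ∧ ∀ k, matVec T (P k) = Q k

/-- The basic properties of a monotone additive functional on finite
nonnegative vectors of arbitrary length: permutation invariance, invariance
under appending a zero entry, additivity under direct sums, and antitonicity
for the modified majorization preorder `≽₀,₁`. -/
def DeltaBase (Δ : ∀ n : ℕ, (Fin n → ℝ) → ℝ) : Prop :=
  (∀ (n : ℕ) (σ : Equiv.Perm (Fin n)) (p : Fin n → ℝ), NonnegVec p →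
    Δ n (p ∘ σ) = Δ n p) ∧
  (∀ (n : ℕ) (p : Fin n → ℝ), NonnegVec p → Δ (n + 1) (Fin.snoc p 0) = Δ n p) ∧
  (∀ (m n : ℕ) (p : Fin m → ℝ) (q : Fin n → ℝ), NonnegVec p → NonnegVec q →
    Δ (m + n) (Fin.append p q) = Δ m p + Δ n q) ∧
  (∀ (m n : ℕ) (p : Fin m → ℝ) (q : Fin n → ℝ), NonnegVec p → NonnegVec q →
    MajMod p q → Δ m p ≤ Δ n q)

/-- The Leibniz rule at `‖·‖₁`. -/
def Leib1 (Δ : ∀ n : ℕ, (Fin n → ℝ) → ℝ) : Prop :=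
  ∀ (m n : ℕ) (p : Fin m → ℝ) (q : Fin n → ℝ), NonnegVec p → NonnegVec q →
    Δ (m * n) (kronFin p q) = Δ m p * (∑ j, q j) + (∑ i, p i) * Δ n q

/-- The Leibniz rule at `‖·‖₀`. -/
def Leib0 (Δ : ∀ n : ℕ, (Fin n → ℝ) → ℝ) : Prop :=
  ∀ (m n : ℕ) (p : Fin m → ℝ) (q : Fin n → ℝ), NonnegVec p → NonnegVec q →
    Δ (m * n) (kronFin p q) = Δ m p * (supp0 q : ℝ) + (supp0 p : ℝ) * Δ n q

/-!
By additivity `Δ p = ∑ i, f (p i)`, where `f x` is the value of `Δ` on the one-entry vector `x`.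
Monotonicity makes these sums Schur concave, and the Leibniz rule becomes a functional equation.

For `‖·‖₀` it reads `f (x y) = f x + f y` on positive reals, and two-point Schur concavity forces
`f ≥ 0` on `[1, ∞)`; so `u ↦ f (exp u)` is additive and monotone, hence linear.

For `‖·‖₁` it reads `f (x y) = f x y + x f y`. Then `n ↦ -f n / n` is completely additive on
positive integers and, by Schur concavity, monotone, hence a multiple `c log`. Thus `f` agrees with
`x ↦ -c x log x` on positive rationals. The difference `g` satisfies the same functional equation,
and the binary sums `f x + f (1 - x)`, monotone on `(0, 1/2]`, must equal `c` times the binary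
entropy; so `g x + g (1 - x) = 0`, and by homogeneity `g` is additive. Hence `g` is a derivation of
`ℝ`, which vanishes on `ℚ`.

The converse is Karamata's inequality: on finitely many points a convex function is an affine
function plus nonnegative multiples of hinges `x ↦ (x - t)⁺`, whose sums are controlled by the sums
of the largest entries.
-/

open scoped Matrix

section Majorization

variable {ι κ : Type*} [Fintype ι] [Fintype κ]

lemma sum_le_topSum (p : ι → ℝ) {k : ℕ} {s : Finset ι} (hs : s.card ≤ k) :
    ∑ i ∈ s, p i ≤ topSum p k := by
  have hs' : s ∈ {s : Finset ι | s.card ≤ k} := hs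
  refine le_trans ?_ (le_ciSup (Set.finite_range _).bddAbove s)
  rw [ciSup_pos hs']

lemma topSum_nonneg (p : ι → ℝ) (k : ℕ) : 0 ≤ topSum p k := by
  simpa using sum_le_topSum p (Finset.card_empty.trans_le k.zero_le)

lemma topSum_le {p : ι → ℝ} {k : ℕ} {a : ℝ} (ha : 0 ≤ a)
    (h : ∀ s : Finset ι, s.card ≤ k → ∑ i ∈ s, p i ≤ a) : topSum p k ≤ a :=
  Real.iSup_le (fun s ↦ Real.iSup_le (fun hs ↦ h s hs) ha) ha

lemma topSum_comp_perm (p : ι → ℝ) (σ : Equiv.Perm ι) (k : ℕ) : topSum (p ∘ σ) k ≤ topSum p k := by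
  refine topSum_le (topSum_nonneg p k) fun s hs ↦ ?_
  calc ∑ i ∈ s, p (σ i) = ∑ i ∈ s.map σ.toEmbedding, p i := by simp [Finset.sum_map]
    _ ≤ topSum p k := sum_le_topSum p (by rwa [Finset.card_map])

lemma majorizes_mulVec [DecidableEq ι] {T : Matrix ι ι ℝ} (hT : T ∈ doublyStochastic ℝ ι)
    (p : ι → ℝ) : Majorizes p (T *ᵥ p) := by
  refine ⟨(sum_mulVec_of_mem_doublyStochastic hT).symm, fun k ↦ ?_⟩
  obtain ⟨w, hw, hw1, rfl⟩ := exists_eq_sum_perm_of_mem_doublyStochastic hT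
  refine topSum_le (topSum_nonneg p k) fun s hs ↦ ?_
  calc ∑ i ∈ s, ((∑ σ, w σ • Equiv.Perm.permMatrix ℝ σ) *ᵥ p) i
      = ∑ σ, w σ * ∑ i ∈ s, p (σ i) := by
        simp only [Matrix.sum_mulVec, Matrix.smul_mulVec, Matrix.permMatrix_mulVec,
          Finset.sum_apply, Pi.smul_apply, Function.comp_apply, smul_eq_mul, Finset.mul_sum]
        exact Finset.sum_comm
    _ ≤ ∑ σ, w σ * topSum p k := by
        gcongr with σ
        · exact hw σ
        · exact (sum_le_topSum (p ∘ σ) hs).trans (topSum_comp_perm p σ k)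
    _ = topSum p k := by rw [← Finset.sum_mul, hw1, one_mul]

lemma Majorizes.sum_hinge_le {p : ι → ℝ} {q : κ → ℝ} (h : Majorizes p q) {t : ℝ} (ht : 0 ≤ t) :
    ∑ j, max (q j - t) 0 ≤ ∑ i, max (p i - t) 0 := by
  set s := Finset.univ.filter fun j ↦ t < q j
  have key : topSum p s.card ≤ s.card * t + ∑ i, max (p i - t) 0 := by
    refine topSum_le (by positivity) fun u hu ↦ ?_
    calc ∑ i ∈ u, p i ≤ ∑ i ∈ u, (t + max (p i - t) 0) :=
          Finset.sum_le_sum fun i _ ↦ by linarith [le_max_left (p i - t) 0]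
      _ = u.card * t + ∑ i ∈ u, max (p i - t) 0 := by
          rw [Finset.sum_add_distrib, Finset.sum_const, nsmul_eq_mul]
      _ ≤ s.card * t + ∑ i, max (p i - t) 0 := by
          gcongr
          exact u.subset_univ
  have hsum : ∑ j, max (q j - t) 0 = ∑ j ∈ s, q j - s.card * t := by
    have hpos (j : κ) : max (q j - t) 0 = if t < q j then q j - t else 0 := by
      split_ifs with hj
      · exact max_eq_left (by linarith)
      · exact max_eq_right (by linarith)
    simp only [hpos, ← Finset.sum_filter, Finset.sum_sub_distrib, Finset.sum_const, nsmul_eq_mul, s]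
  linarith [h.2 s.card, sum_le_topSum q (le_refl s.card)]

end Majorization

/-- Sums of an affine function and finitely many nonnegative multiples of hinges `x ↦ (x - t)⁺`
with `t ∈ s`. On every finite subset of an open interval `s` they realize all convex functions. -/
inductive IsHingeSum (s : Set ℝ) : (ℝ → ℝ) → Prop
  | affine (a b : ℝ) : IsHingeSum s fun x ↦ a + b * x
  | add_hinge {g : ℝ → ℝ} {c t : ℝ} (hg : IsHingeSum s g) (hc : 0 ≤ c) (ht : t ∈ s) :
      IsHingeSum s fun x ↦ g x + c * max (x - t) 0

lemma exists_isHingeSum_eqOn_insert {s : Set ℝ} (hs : IsOpen s) {φ : ℝ → ℝ} (hφ : ConvexOn ℝ s φ)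
    (F : Finset ℝ) (hF : ↑F ⊆ s) {M : ℝ} (hM : M ∈ s) (hFM : ∀ x ∈ F, x < M) :
    ∃ g, IsHingeSum s g ∧ Set.EqOn g φ (insert M F) ∧
      ∃ a b : ℝ, ∀ x, M ≤ x → g x = a + b * x ∧ (x ∈ s → a + b * x ≤ φ x) := by
  induction F using Finset.induction_on_max generalizing M with
  | empty =>
    set b := derivWithin φ (Set.Ioi M) M
    refine ⟨_, .affine (φ M - b * M) b, by simp [Set.EqOn], φ M - b * M, b, fun x hMx ↦
      ⟨rfl, fun hx ↦ ?_⟩⟩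
    rcases hMx.eq_or_lt with rfl | hlt
    · linarith
    · have := hφ.rightDeriv_le_slope_of_mem_interior (hs.interior_eq.symm ▸ hM) hx hlt
      rw [slope_def_field, le_div_iff₀ (by linarith)] at this
      linarith
  | insert m F hFm ih =>
    rw [Finset.coe_insert, Set.insert_subset_iff] at hF
    obtain ⟨g, hg, hgφ, a, b, hab⟩ := ih hF.2 hF.1 hFm
    have hmM : m < M := hFM m (F.mem_insert_self m)
    have hgm : a + b * m = φ m := by rw [← (hab m le_rfl).1, hgφ (Set.mem_insert m F)]
    set c := (φ M - (a + b * M)) / (M - m)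
    have hc : c * (M - m) = φ M - (a + b * M) := div_mul_cancel₀ _ (by linarith)
    have hc0 : 0 ≤ c := div_nonneg (by linarith [(hab M hmM.le).2 hM]) (by linarith)
    have hbent {x : ℝ} (hx : M ≤ x) :
        g x + c * max (x - m) 0 = (a - c * m) + (b + c) * x := by
      rw [max_eq_left (by linarith), (hab x (by linarith)).1]; ring
    refine ⟨_, hg.add_hinge hc0 hF.1, ?_, a - c * m, b + c, fun x hx ↦ ⟨hbent hx, fun hxs ↦ ?_⟩⟩
    · rintro x (rfl | hx)
      · linarith [hbent (le_refl x)]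
      · rw [Finset.coe_insert] at hx
        have hxm : x ≤ m := hx.elim le_of_eq fun h ↦ (hFm x h).le
        simp [hgφ hx, hxm]
    · rcases hx.eq_or_lt with rfl | hlt
      · linarith
      · have hslope := hφ.slope_mono_adjacent hF.1 hxs hmM hlt
        rw [div_le_div_iff₀ (by linarith) (by linarith)] at hslope
        have hφM : φ M - φ m = (b + c) * (M - m) := by linarith
        rw [hφM, mul_right_comm] at hslope
        linarith [le_of_mul_le_mul_right hslope (by linarith)]

lemma exists_isHingeSum_eqOn {s : Set ℝ} (hs : IsOpen s) {φ : ℝ → ℝ} (hφ : ConvexOn ℝ s φ)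
    {F : Finset ℝ} (hF : ↑F ⊆ s) : ∃ g, IsHingeSum s g ∧ Set.EqOn g φ F := by
  induction F using Finset.induction_on_max with
  | empty => exact ⟨_, .affine 0 0, by simp⟩
  | insert M F hFM _ =>
    rw [Finset.coe_insert, Set.insert_subset_iff] at hF
    obtain ⟨g, hg, hgφ, -⟩ := exists_isHingeSum_eqOn_insert hs hφ F hF.2 hF.1 hFM
    exact ⟨g, hg, by rwa [Finset.coe_insert]⟩

section Karamata

variable {ι κ : Type*} [Fintype ι] [Fintype κ]

lemma sum_support_affine (a b : ℝ) (p : ι → ℝ) :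
    ∑ i, (if p i = 0 then 0 else a + b * p i) = supp0 p * a + b * ∑ i, p i := by
  have hterm (i : ι) : (if p i = 0 then 0 else a + b * p i)
      = (if p i ≠ 0 then a else 0) + b * p i := by split_ifs <;> simp_all
  simp only [hterm, Finset.sum_add_distrib, ← Finset.mul_sum, ← Finset.sum_filter,
    Finset.sum_const, nsmul_eq_mul, supp0]

lemma sum_support_add_hinge (g : ℝ → ℝ) (c : ℝ) {t : ℝ} (ht : 0 ≤ t) (p : ι → ℝ) :
    ∑ i, (if p i = 0 then 0 else g (p i) + c * max (p i - t) 0)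
      = ∑ i, (if p i = 0 then 0 else g (p i)) + c * ∑ i, max (p i - t) 0 := by
  rw [Finset.mul_sum, ← Finset.sum_add_distrib]
  refine Finset.sum_congr rfl fun i _ ↦ ?_
  split_ifs with hi
  · simp [hi, ht]
  · rfl

lemma IsHingeSum.sum_le {g : ℝ → ℝ} (hg : IsHingeSum (Set.Ioi 0) g) {p : ι → ℝ} {q : κ → ℝ}
    (h : MajMod p q) :
    ∑ j, (if q j = 0 then 0 else g (q j)) ≤ ∑ i, if p i = 0 then 0 else g (p i) := by
  induction hg with
  | affine a b => rw [sum_support_affine, sum_support_affine, h.1.1, h.2]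
  | add_hinge _ hc ht ih =>
    have ht' := (Set.mem_Ioi.1 ht).le
    rw [sum_support_add_hinge _ _ ht', sum_support_add_hinge _ _ ht']
    gcongr
    exact h.1.sum_hinge_le ht'

/-- Concavity is only required on `(0, ∞)`, so that `G` may jump at `0`: zero entries contribute
nothing, and equality of the supports matches the constant terms. -/
lemma MajMod.sum_le_of_concaveOn {G : ℝ → ℝ} (hG : ConcaveOn ℝ (Set.Ioi 0) G) (hG0 : G 0 = 0)
    {p : ι → ℝ} {q : κ → ℝ} (hp : ∀ i, 0 ≤ p i) (hq : ∀ j, 0 ≤ q j) (h : MajMod p q) :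
    ∑ i, G (p i) ≤ ∑ j, G (q j) := by
  classical
  set F := ((Finset.univ.image p ∪ Finset.univ.image q).erase 0)
  have hF : ↑F ⊆ Set.Ioi (0 : ℝ) := by
    intro x hx
    simp only [F, Finset.coe_erase, Finset.coe_union, Finset.coe_image, Finset.coe_univ,
      Set.image_univ] at hx
    obtain ⟨⟨i, rfl⟩ | ⟨j, rfl⟩, h0⟩ := hx
    exacts [(hp i).lt_of_ne' h0, (hq j).lt_of_ne' h0]
  obtain ⟨g, hg, hgG⟩ := exists_isHingeSum_eqOn isOpen_Ioi hG.neg hF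
  have hterm {x : ℝ} (hx : x = 0 ∨ x ∈ F) : (if x = 0 then 0 else g x) = -G x := by
    split_ifs with h0
    · simp [h0, hG0]
    · exact hgG (hx.resolve_left h0)
  have hpF (i : ι) : p i = 0 ∨ p i ∈ F := by simp [F, em]
  have hqF (j : κ) : q j = 0 ∨ q j ∈ F := by simp [F, em]
  simpa only [hterm (hpF _), hterm (hqF _), Finset.sum_neg_distrib, neg_le_neg_iff]
    using hg.sum_le h

end Karamata

/-- The Leibniz rule `f (x y) = f x y + x f y` on the nonnegative reals. -/
def IsLeibniz (f : ℝ → ℝ) : Prop :=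
  ∀ x y : ℝ, 0 ≤ x → 0 ≤ y → f (x * y) = f x * y + x * f y

namespace IsLeibniz

variable {f g : ℝ → ℝ}

lemma add (hf : IsLeibniz f) (hg : IsLeibniz g) : IsLeibniz fun x ↦ f x + g x :=
  fun x y hx hy ↦ by simp only [hf x y hx hy, hg x y hx hy]; ring

lemma const_mul (hf : IsLeibniz f) (c : ℝ) : IsLeibniz fun x ↦ c * f x :=
  fun x y hx hy ↦ by simp only [hf x y hx hy]; ring

end IsLeibniz

lemma isLeibniz_negMulLog : IsLeibniz Real.negMulLog :=
  fun x y _ _ ↦ by rw [Real.negMulLog_mul]; ring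

lemma isLeibniz_derivation (D : Derivation ℚ ℝ ℝ) : IsLeibniz D :=
  fun x y _ _ ↦ by simp only [D.leibniz, smul_eq_mul]; ring

section SumFunctionals

variable {ι : Type*} [Fintype ι]

lemma H1ent_eq_sum_negMulLog (p : ι → ℝ) : H1ent p = ∑ i, Real.negMulLog (p i) := by
  simp only [H1ent, Real.negMulLog, neg_mul, Finset.sum_neg_distrib]

lemma H0'_eq_sum_log (p : ι → ℝ) : H0' p = ∑ i, Real.log (p i) :=
  Finset.sum_congr rfl fun i _ ↦ by split_ifs with h <;> simp [h]

lemma cast_supp0 (p : ι → ℝ) : (supp0 p : ℝ) = ∑ i, if p i = 0 then 0 else 1 := by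
  simp only [supp0, Finset.card_filter, Nat.cast_sum, Nat.cast_ite, Nat.cast_one, Nat.cast_zero,
    ne_eq, ite_not]

lemma sum_kronFin (G : ℝ → ℝ) {m n : ℕ} (p : Fin m → ℝ) (q : Fin n → ℝ) :
    ∑ i, G (kronFin p q i) = ∑ i, ∑ j, G (p i * q j) := by
  rw [← Fintype.sum_prod_type']
  exact Equiv.sum_comp finProdFinEquiv.symm fun x : Fin m × Fin n ↦ G (p x.1 * q x.2)

lemma deltaBase_sum {G : ℝ → ℝ} (hG0 : G 0 = 0)
    (hG : ∀ (m n : ℕ) (p : Fin m → ℝ) (q : Fin n → ℝ), NonnegVec p → NonnegVec q → MajMod p q →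
      ∑ i, G (p i) ≤ ∑ j, G (q j)) :
    DeltaBase fun _ p ↦ ∑ i, G (p i) :=
  ⟨fun _ σ p _ ↦ Equiv.sum_comp σ (G ∘ p), fun _ p _ ↦ by simp [Fin.sum_univ_castSucc, hG0],
    fun _ _ p q _ _ ↦ by simp [Fin.sum_univ_add], hG⟩

lemma IsLeibniz.leib1_sum {G : ℝ → ℝ} (hG : IsLeibniz G) : Leib1 fun _ p ↦ ∑ i, G (p i) := by
  intro m n p q hp hq
  simp only [sum_kronFin, fun i j ↦ hG (p i) (q j) (hp i) (hq j), Finset.sum_add_distrib,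
    ← Finset.mul_sum, ← Finset.sum_mul]

lemma leib0_sum_log (c : ℝ) : Leib0 fun _ p ↦ ∑ i, c * Real.log (p i) := by
  intro m n p q _ _
  have hlog (x y : ℝ) : c * Real.log (x * y) = c * Real.log x * (if y = 0 then 0 else 1)
      + (if x = 0 then 0 else 1) * (c * Real.log y) := by
    rcases eq_or_ne x 0 with rfl | hx
    · simp
    rcases eq_or_ne y 0 with rfl | hy
    · simp
    rw [Real.log_mul hx hy, if_neg hx, if_neg hy]
    ring
  simp only [sum_kronFin fun x ↦ c * Real.log x, hlog, Finset.sum_add_distrib, ← Finset.mul_sum,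
    ← Finset.sum_mul, cast_supp0]

end SumFunctionals

lemma deltaBase_leib1_entropy_add_derivation {c : ℝ} (hc : 0 ≤ c) (D : Derivation ℚ ℝ ℝ) :
    DeltaBase (fun _ p ↦ c * H1ent p + D (∑ i, p i)) ∧
      Leib1 (fun _ p ↦ c * H1ent p + D (∑ i, p i)) := by
  have hsum {ι : Type} [Fintype ι] (p : ι → ℝ) :
      c * H1ent p + D (∑ i, p i) = ∑ i, (c * Real.negMulLog (p i) + D (p i)) := by
    rw [H1ent_eq_sum_negMulLog, Finset.mul_sum, map_sum, Finset.sum_add_distrib]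
  have hconc : ConcaveOn ℝ (Set.Ioi 0) fun x ↦ c * Real.negMulLog x :=
    (Real.concaveOn_negMulLog.subset Set.Ioi_subset_Ici_self (convex_Ioi 0)).smul hc
  simp only [hsum]
  refine ⟨deltaBase_sum (G := fun x ↦ c * Real.negMulLog x + D x) (by simp)
    fun m n p q hp hq h ↦ ?_,
    ((isLeibniz_negMulLog.const_mul c).add (isLeibniz_derivation D)).leib1_sum⟩
  rw [Finset.sum_add_distrib, Finset.sum_add_distrib, ← map_sum, ← map_sum, h.1.1]
  gcongr
  exact h.sum_le_of_concaveOn hconc (by simp) hp hq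

lemma deltaBase_leib0_sum_log {c : ℝ} (hc : 0 ≤ c) :
    DeltaBase (fun _ p ↦ c * H0' p) ∧ Leib0 (fun _ p ↦ c * H0' p) := by
  have hconc : ConcaveOn ℝ (Set.Ioi 0) fun x ↦ c * Real.log x :=
    strictConcaveOn_log_Ioi.concaveOn.smul hc
  simp only [H0'_eq_sum_log, Finset.mul_sum]
  exact ⟨deltaBase_sum (G := fun x ↦ c * Real.log x) (by simp) fun m n p q hp hq h ↦
    h.sum_le_of_concaveOn hconc (by simp) hp hq, leib0_sum_log c⟩

/-- Additivity of a functional of vectors under direct sums. -/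
def IsAdditive (Δ : ∀ n : ℕ, (Fin n → ℝ) → ℝ) : Prop :=
  ∀ (m n : ℕ) (p : Fin m → ℝ) (q : Fin n → ℝ), NonnegVec p → NonnegVec q →
    Δ (m + n) (Fin.append p q) = Δ m p + Δ n q

/-- Antitonicity of a functional of vectors for the preorder `≽₀,₁`. -/
def IsMajAntitone (Δ : ∀ n : ℕ, (Fin n → ℝ) → ℝ) : Prop :=
  ∀ (m n : ℕ) (p : Fin m → ℝ) (q : Fin n → ℝ), NonnegVec p → NonnegVec q →
    MajMod p q → Δ m p ≤ Δ n q

/-- Schur concavity of all the sums `p ↦ ∑ i, f (p i)` over strictly positive vectors, phrased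
through doubly stochastic matrices. -/
def IsSchurConcave (f : ℝ → ℝ) : Prop :=
  ∀ ⦃n : ℕ⦄ ⦃T : Matrix (Fin n) (Fin n) ℝ⦄, T ∈ doublyStochastic ℝ (Fin n) →
    ∀ p : Fin n → ℝ, (∀ i, 0 < p i) → ∑ i, f (p i) ≤ ∑ i, f ((T *ᵥ p) i)

lemma supp0_of_pos {n : ℕ} {p : Fin n → ℝ} (hp : ∀ i, 0 < p i) : supp0 p = n := by
  simp [supp0, (hp _).ne']

lemma mulVec_pos_of_mem_doublyStochastic {ι : Type*} [Fintype ι] [DecidableEq ι]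
    {T : Matrix ι ι ℝ} (hT : T ∈ doublyStochastic ℝ ι) {p : ι → ℝ} (hp : ∀ i, 0 < p i) (i : ι) :
    0 < (T *ᵥ p) i := by
  obtain ⟨j, -, hj⟩ := Finset.exists_ne_zero_of_sum_ne_zero
    ((sum_row_of_mem_doublyStochastic hT i).trans_ne one_ne_zero)
  have hT0 (j : ι) : 0 ≤ T i j := nonneg_of_mem_doublyStochastic hT
  exact Finset.sum_pos' (fun j _ ↦ mul_nonneg (hT0 j) (hp j).le)
    ⟨j, Finset.mem_univ j, mul_pos ((hT0 j).lt_of_ne' hj) (hp j)⟩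

section Singleton

variable {Δ : ∀ n : ℕ, (Fin n → ℝ) → ℝ}

lemma IsAdditive.eq_sum_singleton (hΔ : IsAdditive Δ) {n : ℕ} {p : Fin n → ℝ} (hp : NonnegVec p) :
    Δ n p = ∑ i, Δ 1 fun _ ↦ p i := by
  induction n with
  | zero =>
    have h := hΔ 0 0 p p hp hp
    have hpp : Fin.append p p = p := funext fun i ↦ i.elim0
    simpa [hpp] using h
  | succ n ih =>
    have happend : Fin.append (Fin.init p) (fun _ : Fin 1 ↦ p (Fin.last n)) = p := by
      rw [Fin.append_right_eq_snoc, Fin.snoc_init_self]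
    have hinit : NonnegVec (Fin.init p) := fun i ↦ hp i.castSucc
    calc Δ (n + 1) p = Δ n (Fin.init p) + Δ 1 fun _ ↦ p (Fin.last n) := by
          rw [← hΔ n 1 _ _ hinit fun _ ↦ hp (Fin.last n), happend]
      _ = ∑ i, Δ 1 fun _ ↦ p i := by
          rw [ih hinit, Fin.sum_univ_castSucc]
          rfl

lemma IsMajAntitone.isSchurConcave_singleton (hΔ : IsMajAntitone Δ) (hadd : IsAdditive Δ) :
    IsSchurConcave fun x ↦ Δ 1 fun _ ↦ x := by
  intro n T hT p hp
  have hTp := mulVec_pos_of_mem_doublyStochastic hT hp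
  have hmaj : MajMod p (T *ᵥ p) :=
    ⟨majorizes_mulVec hT p, by rw [supp0_of_pos hp, supp0_of_pos hTp]⟩
  rw [← hadd.eq_sum_singleton fun i ↦ (hp i).le, ← hadd.eq_sum_singleton fun i ↦ (hTp i).le]
  exact hΔ n n _ _ (fun i ↦ (hp i).le) (fun i ↦ (hTp i).le) hmaj

lemma kronFin_singleton (x y : ℝ) :
    kronFin (fun _ : Fin 1 ↦ x) (fun _ : Fin 1 ↦ y) = fun _ ↦ x * y := rfl

lemma Leib1.isLeibniz_singleton (hΔ : Leib1 Δ) : IsLeibniz fun x ↦ Δ 1 fun _ ↦ x := by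
  intro x y hx hy
  simpa [kronFin_singleton] using hΔ 1 1 (fun _ ↦ x) (fun _ ↦ y) (fun _ ↦ hx) fun _ ↦ hy

lemma Leib0.singleton_zero (hΔ : Leib0 Δ) : (Δ 1 fun _ ↦ 0) = 0 := by
  simpa [kronFin_singleton, supp0] using
    hΔ 1 1 (fun _ ↦ 0) (fun _ ↦ 0) (fun _ ↦ le_rfl) fun _ ↦ le_rfl

lemma Leib0.singleton_mul (hΔ : Leib0 Δ) {x y : ℝ} (hx : 0 < x) (hy : 0 < y) :
    (Δ 1 fun _ ↦ x * y) = (Δ 1 fun _ ↦ x) + Δ 1 fun _ ↦ y := by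
  simpa [kronFin_singleton, supp0, hx.ne', hy.ne'] using
    hΔ 1 1 (fun _ ↦ x) (fun _ ↦ y) (fun _ ↦ hx.le) fun _ ↦ hy.le

end Singleton

namespace IsSchurConcave

variable {f : ℝ → ℝ}

lemma sum_le_card_mul_average (hf : IsSchurConcave f) {n : ℕ} {p : Fin n → ℝ}
    (hp : ∀ i, 0 < p i) : ∑ i, f (p i) ≤ n * f ((∑ i, p i) / n) := by
  obtain rfl | hn := n.eq_zero_or_pos
  · simp
  have hn' : (n : ℝ) ≠ 0 := by positivity
  have hT : (Matrix.of fun _ _ ↦ (n : ℝ)⁻¹) ∈ doublyStochastic ℝ (Fin n) := by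
    rw [mem_doublyStochastic_iff_sum]
    simp [hn']
  have hTp (i : Fin n) : ((Matrix.of fun _ _ ↦ (n : ℝ)⁻¹) *ᵥ p) i = (∑ i, p i) / n := by
    simp only [Matrix.mulVec, dotProduct, Matrix.of_apply, ← Finset.mul_sum]
    ring
  simpa only [hTp, Finset.sum_const, Finset.card_univ, Fintype.card_fin, nsmul_eq_mul] using
    hf hT p hp

lemma add_le_add_of_mem_Icc (hf : IsSchurConcave f) {x y u v : ℝ} (hx : 0 < x)
    (hu : u ∈ Set.Icc x y) (huv : u + v = x + y) : f x + f y ≤ f u + f v := by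
  obtain ⟨a, b, ha, hb, hab, rfl⟩ := Icc_subset_segment hu
  have hT : !![a, b; b, a] ∈ doublyStochastic ℝ (Fin 2) := by
    simp [mem_doublyStochastic_iff_sum, Fin.forall_fin_two, ha, hb, hab, add_comm b a]
  have hv : b * x + a * y = v := by
    simp only [smul_eq_mul] at huv
    linear_combination (x + y) * hab - huv
  have hy : 0 < y := hx.trans_le (hu.1.trans hu.2)
  simpa [Fin.sum_univ_two, Matrix.mulVec, dotProduct, hv] using
    hf hT ![x, y] (by simp [Fin.forall_fin_two, hx, hy])

end IsSchurConcave

section Logarithm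

variable {f : ℝ → ℝ}

/-- `t` is the geometric mean of the roots `t ± √(t² - t)`, and also their arithmetic mean. -/
lemma IsSchurConcave.nonneg_of_map_mul (hf : IsSchurConcave f)
    (hmul : ∀ x y, 0 < x → 0 < y → f (x * y) = f x + f y) {t : ℝ} (ht : 1 ≤ t) : 0 ≤ f t := by
  set r := √(t ^ 2 - t)
  have hr0 : 0 ≤ r := Real.sqrt_nonneg _
  have hr : r ^ 2 = t ^ 2 - t := Real.sq_sqrt (by nlinarith)
  have hrt : r < t := by nlinarith
  have hprod : f t = f (t - r) + f (t + r) := by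
    rw [← hmul _ _ (by linarith) (by linarith)]
    congr 1
    linear_combination hr
  have hmean : f (t - r) + f (t + r) ≤ f t + f t :=
    hf.add_le_add_of_mem_Icc (by linarith) ⟨by linarith, by linarith⟩ (by ring)
  linarith

lemma exists_eq_mul_log_of_map_mul (hmul : ∀ x y, 0 < x → 0 < y → f (x * y) = f x + f y)
    (hpos : ∀ t, 1 ≤ t → 0 ≤ f t) : ∃ c : ℝ, 0 ≤ c ∧ ∀ x, 0 < x → f x = c * Real.log x := by
  set φ : ℝ →+ ℝ := AddMonoidHom.mk' (fun u ↦ f (Real.exp u)) fun u v ↦ by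
    rw [Real.exp_add, hmul _ _ (Real.exp_pos u) (Real.exp_pos v)]
  have hmono : Monotone φ := fun u v huv ↦ by
    have h : 0 ≤ φ (v - u) := hpos _ (Real.one_le_exp (by linarith))
    rwa [map_sub, sub_nonneg] at h
  have hcont : Continuous φ :=
    MeasureTheory.Measure.AddMonoidHom.continuous_of_measurable φ hmono.measurable
  refine ⟨φ 1, hpos _ (Real.one_le_exp zero_le_one), fun x hx ↦ ?_⟩
  calc f x = φ (Real.log x • 1) := by simp [φ, Real.exp_log hx]
    _ = φ 1 * Real.log x := by rw [map_real_smul φ hcont, smul_eq_mul, mul_comm]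

end Logarithm

section CompletelyAdditive

variable {L : ℕ → ℝ}

lemma completelyAdditive_pow (hmul : ∀ m n, 1 ≤ m → 1 ≤ n → L (m * n) = L m + L n) {m : ℕ}
    (hm : 1 ≤ m) (k : ℕ) : L (m ^ k) = k * L m := by
  induction k with
  | zero => simpa using hmul 1 1 le_rfl le_rfl
  | succ k ih =>
    rw [pow_succ, hmul _ _ (Nat.one_le_pow _ _ hm) hm, ih]
    push_cast
    ring

/-- Compare `m ^ k` with the neighbouring powers of `n` and let `k → ∞`. -/
lemma completelyAdditive_mul_log_le (hmul : ∀ m n, 1 ≤ m → 1 ≤ n → L (m * n) = L m + L n)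
    (hmono : MonotoneOn L (Set.Ici 1)) {m n : ℕ} (hm : 1 ≤ m) (hn : 2 ≤ n) :
    L m * Real.log n ≤ L n * Real.log m := by
  have hn1 : 1 ≤ n := by omega
  have hlog : 0 ≤ Real.log n := Real.log_natCast_nonneg n
  have hL1 : L 1 = 0 := by simpa using hmul 1 1 le_rfl le_rfl
  have hLn : 0 ≤ L n := hL1 ▸ hmono (by simp) hn1 hn1
  have hbound (k : ℕ) : (k : ℝ) * (L m * Real.log n - L n * Real.log m) ≤ L n * Real.log n := by
    set j := Nat.log n (m ^ k)
    have hmk : 1 ≤ m ^ k := Nat.one_le_pow _ _ hm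
    have hupper : k * L m ≤ (j + 1) * L n := by
      have hlt : m ^ k < n ^ (j + 1) := Nat.lt_pow_succ_log_self (by omega) _
      have h := hmono hmk (Nat.one_le_pow _ _ hn1) hlt.le
      rw [completelyAdditive_pow hmul hm, completelyAdditive_pow hmul hn1] at h
      exact_mod_cast h
    have hlower : j * Real.log n ≤ k * Real.log m := by
      have hle : n ^ j ≤ m ^ k := Nat.pow_log_le_self n (by omega)
      have h : Real.log ((n : ℝ) ^ j) ≤ Real.log ((m : ℝ) ^ k) :=
        Real.log_le_log (by positivity) (by exact_mod_cast hle)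
      rwa [Real.log_pow, Real.log_pow] at h
    nlinarith [mul_le_mul_of_nonneg_right hupper hlog, mul_le_mul_of_nonneg_left hlower hLn]
  by_contra! hlt
  obtain ⟨k, hk⟩ := exists_nat_gt (L n * Real.log n / (L m * Real.log n - L n * Real.log m))
  rw [div_lt_iff₀ (by linarith)] at hk
  linarith [hbound k]

theorem exists_eq_mul_log_of_completelyAdditive
    (hmul : ∀ m n, 1 ≤ m → 1 ≤ n → L (m * n) = L m + L n) (hmono : MonotoneOn L (Set.Ici 1)) :
    ∃ c : ℝ, 0 ≤ c ∧ ∀ n, 1 ≤ n → L n = c * Real.log n := by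
  have hL1 : L 1 = 0 := by simpa using hmul 1 1 le_rfl le_rfl
  have hlog2 : 0 < Real.log 2 := Real.log_pos one_lt_two
  have hL2 : 0 ≤ L 2 := hL1 ▸ hmono (by simp) (by simp) one_le_two
  refine ⟨L 2 / Real.log 2, by positivity, fun n hn ↦ ?_⟩
  obtain rfl | hn2 := hn.eq_or_lt
  · simp [hL1]
  have hle := completelyAdditive_mul_log_le hmul hmono hn le_rfl
  have hge := completelyAdditive_mul_log_le hmul hmono one_le_two hn2
  push_cast at hle hge
  rw [div_mul_eq_mul_div, eq_div_iff hlog2.ne']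
  exact le_antisymm hle hge

end CompletelyAdditive

namespace IsLeibniz

variable {f : ℝ → ℝ}

lemma map_zero (hf : IsLeibniz f) : f 0 = 0 := by
  simpa using hf 0 0 le_rfl le_rfl

lemma map_one (hf : IsLeibniz f) : f 1 = 0 := by
  simpa using hf 1 1 zero_le_one zero_le_one

lemma map_nat_mul (hf : IsLeibniz f) (hnat : ∀ n : ℕ, 1 ≤ n → f n = 0) {n : ℕ} (hn : 1 ≤ n) {x : ℝ}
    (hx : 0 ≤ x) : f (n * x) = n * f x := by
  rw [hf _ _ n.cast_nonneg hx, hnat n hn, zero_mul, zero_add]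

lemma map_ratCast_eq_zero (hf : IsLeibniz f) (hnat : ∀ n : ℕ, 1 ≤ n → f n = 0) {r : ℚ}
    (hr : 0 < r) : f r = 0 := by
  have hden : (r.den : ℝ) ≠ 0 := by exact_mod_cast r.den_nz
  have hnum : (r.den : ℝ) * r = r.num.toNat := by
    rw [← Int.cast_natCast r.num.toNat, Int.toNat_of_nonneg (Rat.num_nonneg.2 hr.le)]
    exact_mod_cast r.den_mul_eq_num
  have h := hf.map_nat_mul hnat r.den_pos (Rat.cast_nonneg.2 hr.le)
  rw [hnum, hnat _ (by have := Rat.num_pos.2 hr; omega)] at h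
  exact (mul_eq_zero.1 h.symm).resolve_left hden

lemma defect_mul (hf : IsLeibniz f) {t x y : ℝ} (ht : 0 ≤ t) (hx : 0 ≤ x) (hy : 0 ≤ y) :
    f (t * x) + f (t * y) - f (t * (x + y)) = t * (f x + f y - f (x + y)) := by
  rw [hf t x ht hx, hf t y ht hy, hf t _ ht (add_nonneg hx hy)]
  ring

end IsLeibniz

/-- The value `f x + f (1 - x)` on the distribution `(x, 1 - x)` of the functional with one-entry
part `f`; it is `Real.binEntropy` when `f` is `Real.negMulLog`. -/
def binarySum (f : ℝ → ℝ) (x : ℝ) : ℝ := f x + f (1 - x)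

lemma binarySum_one_sub (f : ℝ → ℝ) (x : ℝ) : binarySum f (1 - x) = binarySum f x := by
  rw [binarySum, binarySum, sub_sub_cancel, add_comm]

section BinarySum

variable {f : ℝ → ℝ}

lemma IsLeibniz.add_sub_map_add (hf : IsLeibniz f) {x y : ℝ} (hx : 0 ≤ x) (hy : 0 ≤ y)
    (hxy : 0 < x + y) : f x + f y - f (x + y) = (x + y) * binarySum f (x / (x + y)) := by
  have hone : 1 - x / (x + y) = y / (x + y) := by field_simp; ring
  have h := hf.defect_mul hxy.le (div_nonneg hx hxy.le) (div_nonneg hy hxy.le)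
  rw [mul_div_cancel₀ _ hxy.ne', mul_div_cancel₀ _ hxy.ne', ← add_div, div_self hxy.ne', mul_one,
    hf.map_one, sub_zero] at h
  rw [h, binarySum, hone]

lemma IsSchurConcave.monotoneOn_binarySum (hf : IsSchurConcave f) :
    MonotoneOn (binarySum f) (Set.Ioc 0 (1 / 2)) := fun x hx y hy hxy ↦
  hf.add_le_add_of_mem_Icc hx.1 ⟨hxy, by linarith [hx.2, hy.2]⟩ (by ring)

/-- The cocycle identity for the distribution `(x, x, 1 - 2 x)`, in which the two binary sums at
`x / (1 - x) ≤ 2 x` are compared by monotonicity. -/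
lemma mul_binarySum_le (hf : IsSchurConcave f) (hL : IsLeibniz f) {x : ℝ} (hx : 0 < x)
    (hx' : x ≤ 1 / 4) : 2 * x * binarySum f (1 / 2) + x * binarySum f (2 * x) ≤ binarySum f x := by
  have hxx := hL.add_sub_map_add hx.le hx.le (by linarith)
  have hxy := hL.add_sub_map_add (y := 1 - 2 * x) hx.le (by linarith) (by linarith)
  have hhalf : x / (x + x) = 1 / 2 := by field_simp; ring
  rw [hhalf, ← two_mul x] at hxx
  rw [show x + (1 - 2 * x) = 1 - x by ring] at hxy
  have hmono : binarySum f (x / (1 - x)) ≤ binarySum f (2 * x) := by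
    refine hf.monotoneOn_binarySum ⟨by apply div_pos <;> linarith, ?_⟩ ⟨by linarith, by linarith⟩ ?_
    all_goals rw [div_le_iff₀ (by linarith)]; nlinarith
  have hscaled := mul_le_mul_of_nonneg_left hmono (by linarith : 0 ≤ 1 - x)
  simp only [binarySum] at hxx hxy hscaled ⊢
  linarith

lemma binarySum_nonneg (hf : IsSchurConcave f) (hL : IsLeibniz f) {x : ℝ}
    (hx : x ∈ Set.Ioc 0 (1 / 2)) : 0 ≤ binarySum f x := by
  have hquarter := mul_binarySum_le hf hL (x := 1 / 4) (by norm_num) le_rfl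
  have hquarter_le : binarySum f (1 / 4) ≤ binarySum f (1 / 2) :=
    hf.monotoneOn_binarySum (by norm_num) (by norm_num) (by norm_num)
  rw [show (2 : ℝ) * (1 / 4) = 1 / 2 by norm_num] at hquarter
  have hhalf : 0 ≤ binarySum f (1 / 2) := by linarith
  have hlarge {x : ℝ} (hx : x ∈ Set.Ioc 0 (1 / 2)) (hx4 : 1 / 4 ≤ x) : 0 ≤ binarySum f x := by
    linarith [hf.monotoneOn_binarySum ⟨by norm_num, by norm_num⟩ hx hx4]
  have hdyadic (n : ℕ) : ∀ x ∈ Set.Ioc (0 : ℝ) (1 / 2), (1 / 4) * (1 / 2) ^ n ≤ x →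
      0 ≤ binarySum f x := by
    induction n with
    | zero => exact fun x hx hle ↦ hlarge hx (by simpa using hle)
    | succ n ih =>
      intro x hx hle
      rcases le_total x (1 / 4) with hx4 | hx4
      · have h2x : 0 ≤ binarySum f (2 * x) :=
          ih (2 * x) ⟨by linarith [hx.1], by linarith⟩ (by rw [pow_succ] at hle; linarith)
        have h0 := hx.1
        exact le_trans (by positivity) (mul_binarySum_le hf hL hx.1 hx4)
      · exact hlarge hx hx4
  obtain ⟨n, hn⟩ := exists_pow_lt_of_lt_one (y := (1 / 2 : ℝ)) (x := 4 * x) (by linarith [hx.1])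
    (by norm_num)
  exact hdyadic n x hx (by linarith)

end BinarySum

section Integers

variable {f : ℝ → ℝ}

lemma IsLeibniz.mul_map_inv (hL : IsLeibniz f) {x : ℝ} (hx : 0 < x) : x * f x⁻¹ = -f x / x := by
  have h := hL x x⁻¹ hx.le (inv_nonneg.2 hx.le)
  rw [mul_inv_cancel₀ hx.ne', hL.map_one] at h
  linear_combination -h

lemma IsLeibniz.neg_map_div_mul (hL : IsLeibniz f) {x y : ℝ} (hx : 0 < x) (hy : 0 < y) :
    -f (x * y) / (x * y) = -f x / x + -f y / y := by
  rw [hL x y hx.le hy.le]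
  field_simp
  ring

/-- Split an entry `ε` off the uniform distribution on `n` points and compare with the uniform
distribution on `n + 1` points. -/
lemma one_sub_mul_le_succ_mul_map_inv (hf : IsSchurConcave f) (hL : IsLeibniz f) {n : ℕ}
    (hn : 1 ≤ n) {ε : ℝ} (hε : ε ∈ Set.Ioc 0 (1 / 2)) :
    (1 - ε) * (n * f (n : ℝ)⁻¹) ≤ (n + 1 : ℕ) * f ((n + 1 : ℕ) : ℝ)⁻¹ := by
  have hn0 : (0 : ℝ) < n := by exact_mod_cast hn
  have hε1 : 0 < 1 - ε := by linarith [hε.2]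
  set p : Fin (n + 1) → ℝ := Fin.snoc (fun _ ↦ (1 - ε) * (n : ℝ)⁻¹) ε
  have hp : ∀ i, 0 < p i := Fin.lastCases (by simpa [p] using hε.1) fun i ↦ by
    simp only [p, Fin.snoc_castSucc]; positivity
  have hsum (g : ℝ → ℝ) : ∑ i, g (p i) = n * g ((1 - ε) * (n : ℝ)⁻¹) + g ε := by
    simp [p, Fin.sum_univ_castSucc]
  have hp1 : ∑ i, p i = 1 := by
    rw [hsum fun x ↦ x]; field_simp; ring
  have havg := hf.sum_le_card_mul_average hp
  rw [hsum f, hp1, one_div, hL _ _ hε1.le (inv_nonneg.2 hn0.le)] at havg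
  have hbin := binarySum_nonneg hf hL hε
  have hexpand : n * (f (1 - ε) * (n : ℝ)⁻¹ + (1 - ε) * f (n : ℝ)⁻¹)
      = f (1 - ε) + (1 - ε) * (n * f (n : ℝ)⁻¹) := by field_simp
  rw [binarySum] at hbin
  linarith

lemma natCast_mul_map_inv_le_succ (hf : IsSchurConcave f) (hL : IsLeibniz f) {n : ℕ}
    (hn : 1 ≤ n) : n * f (n : ℝ)⁻¹ ≤ (n + 1 : ℕ) * f ((n + 1 : ℕ) : ℝ)⁻¹ := by
  have hlim : Filter.Tendsto (fun ε : ℝ ↦ (1 - ε) * (n * f (n : ℝ)⁻¹)) (nhdsWithin 0 (Set.Ioi 0))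
      (nhds ((1 - 0) * (n * f (n : ℝ)⁻¹))) :=
    ((by fun_prop : Continuous fun ε : ℝ ↦ (1 - ε) * (n * f (n : ℝ)⁻¹)).tendsto 0).mono_left
      nhdsWithin_le_nhds
  rw [sub_zero, one_mul] at hlim
  refine le_of_tendsto hlim ?_
  filter_upwards [Ioc_mem_nhdsGT (by norm_num : (0 : ℝ) < 1 / 2)] with ε hε
  exact one_sub_mul_le_succ_mul_map_inv hf hL hn hε

lemma exists_map_natCast_eq_mul_negMulLog (hf : IsSchurConcave f) (hL : IsLeibniz f) :
    ∃ c : ℝ, 0 ≤ c ∧ ∀ n : ℕ, 1 ≤ n → f n = c * Real.negMulLog n := by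
  have hmono : MonotoneOn (fun n : ℕ ↦ -f n / n) (Set.Ici 1) := by
    refine monotoneOn_of_le_succ Set.ordConnected_Ici fun n _ hn _ ↦ ?_
    have hn0 : (0 : ℝ) < n := by exact_mod_cast hn
    simpa only [← hL.mul_map_inv hn0, Nat.succ_eq_succ, Nat.succ_eq_add_one,
      ← hL.mul_map_inv (by positivity : (0 : ℝ) < (n + 1 : ℕ))]
      using natCast_mul_map_inv_le_succ hf hL hn
  obtain ⟨c, hc, hlog⟩ := exists_eq_mul_log_of_completelyAdditive
    (L := fun n : ℕ ↦ -f n / n) (fun m n hm hn ↦ by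
      have := hL.neg_map_div_mul (x := m) (y := n) (by exact_mod_cast hm) (by exact_mod_cast hn)
      exact_mod_cast this) hmono
  refine ⟨c, hc, fun n hn ↦ ?_⟩
  have hn0 : (n : ℝ) ≠ 0 := by positivity
  have h := hlog n hn
  rw [div_eq_iff hn0] at h
  rw [Real.negMulLog]
  linear_combination -h

end Integers

lemma eqOn_Ioo_of_monotoneOn_of_continuousOn_of_dense {α β : Type*} [LinearOrder α]
    [TopologicalSpace α] [OrderTopology α] [DenselyOrdered α] [PartialOrder β] [TopologicalSpace β]
    [OrderClosedTopology β] {u v : α → β} {a b : α} {s : Set α} (hu : MonotoneOn u (Set.Ioo a b))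
    (hv : ContinuousOn v (Set.Ioo a b)) (hs : Dense s) (huv : Set.EqOn u v (Set.Ioo a b ∩ s)) :
    Set.EqOn u v (Set.Ioo a b) := by
  intro x hx
  have hcl {c d : α} (hcd : c < d) (hxcd : x ∈ Set.Icc c d) : x ∈ closure (Set.Ioo c d ∩ s) :=
    closure_minimal (hs.open_subset_closure_inter isOpen_Ioo) isClosed_closure
      (by rwa [closure_Ioo hcd.ne])
  have hleft : Set.Ioo a x ⊆ Set.Ioo a b := Set.Ioo_subset_Ioo_right hx.2.le
  have hright : Set.Ioo x b ⊆ Set.Ioo a b := Set.Ioo_subset_Ioo_left hx.1.le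
  apply le_antisymm
  · refine ContinuousWithinAt.closure_le (f := fun _ ↦ u x) (hcl hx.2 ⟨le_rfl, hx.2.le⟩)
      continuousWithinAt_const ((hv x hx).mono (Set.inter_subset_left.trans hright)) fun y hy ↦ ?_
    rw [← huv ⟨hright hy.1, hy.2⟩]
    exact hu hx (hright hy.1) hy.1.1.le
  · refine ContinuousWithinAt.closure_le (g := fun _ ↦ u x) (hcl hx.1 ⟨hx.1.le, le_rfl⟩)
      ((hv x hx).mono (Set.inter_subset_left.trans hleft)) continuousWithinAt_const fun y hy ↦ ?_
    rw [← huv ⟨hleft hy.1, hy.2⟩]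
    exact hu (hleft hy.1) hx hy.1.2.le

section RealLeibniz

variable {f : ℝ → ℝ}

lemma binarySum_eq_mul_binEntropy (hf : IsSchurConcave f) {c : ℝ}
    (hrat : ∀ r : ℚ, 0 < r → f r = c * Real.negMulLog r) {x : ℝ} (hx : x ∈ Set.Ioo 0 1) :
    binarySum f x = c * Real.binEntropy x := by
  have hbin (r : ℚ) (hr : (r : ℝ) ∈ Set.Ioo 0 1) : binarySum f r = c * Real.binEntropy r := by
    have hr0 : 0 < r := by exact_mod_cast hr.1
    have hr1 : 0 < 1 - r := sub_pos.2 (by exact_mod_cast hr.2)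
    have h1r := hrat _ hr1
    push_cast at h1r
    rw [binarySum, hrat r hr0, h1r, Real.binEntropy_eq_negMulLog_add_negMulLog_one_sub, mul_add]
  have hlower : Set.EqOn (binarySum f) (fun x ↦ c * Real.binEntropy x) (Set.Ioo 0 (1 / 2)) := by
    refine eqOn_Ioo_of_monotoneOn_of_continuousOn_of_dense
      (hf.monotoneOn_binarySum.mono Set.Ioo_subset_Ioc_self)
      (continuous_const.mul Real.binEntropy_continuous).continuousOn
      (s := Set.range ((↑) : ℚ → ℝ)) Rat.denseRange_cast ?_
    rintro _ ⟨hx, r, rfl⟩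
    exact hbin r ⟨hx.1, by linarith [hx.2]⟩
  rcases lt_trichotomy x (1 / 2) with hlt | rfl | hgt
  · exact hlower ⟨hx.1, hlt⟩
  · simpa using hbin (1 / 2) (by norm_num)
  · rw [← binarySum_one_sub, ← Real.binEntropy_one_sub]
    exact hlower ⟨by linarith [hx.2], by linarith⟩

lemma IsLeibniz.map_add_of_binarySum_eq_zero (hL : IsLeibniz f)
    (hbin : ∀ x ∈ Set.Ioo 0 1, binarySum f x = 0) {x y : ℝ} (hx : 0 ≤ x) (hy : 0 ≤ y) :
    f (x + y) = f x + f y := by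
  rcases hx.eq_or_lt with rfl | hx
  · simp [hL.map_zero]
  rcases hy.eq_or_lt with rfl | hy
  · simp [hL.map_zero]
  have hxy : 0 < x + y := by linarith
  have h := hL.add_sub_map_add hx.le hy.le hxy
  rw [hbin _ ⟨div_pos hx hxy, (div_lt_one hxy).2 (by linarith)⟩, mul_zero] at h
  linarith

lemma IsLeibniz.exists_derivation (hL : IsLeibniz f)
    (hadd : ∀ x y, 0 ≤ x → 0 ≤ y → f (x + y) = f x + f y) :
    ∃ D : Derivation ℚ ℝ ℝ, ∀ x, 0 ≤ x → f x = D x := by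
  set d : ℝ → ℝ := fun x ↦ f x⁺ - f x⁻
  have hd {x a b : ℝ} (ha : 0 ≤ a) (hb : 0 ≤ b) (hx : x = a - b) : d x = f a - f b := by
    have h : x⁺ + b = a + x⁻ := by linarith [posPart_sub_negPart x]
    have hf := congrArg f h
    rw [hadd _ _ (posPart_nonneg x) hb, hadd _ _ ha (negPart_nonneg x)] at hf
    linarith
  have hd_add (x y : ℝ) : d (x + y) = d x + d y := by
    have hxy : x + y = (x⁺ + y⁺) - (x⁻ + y⁻) := by
      linarith [posPart_sub_negPart x, posPart_sub_negPart y]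
    rw [hd (by positivity) (by positivity) hxy, hadd _ _ (posPart_nonneg x) (posPart_nonneg y),
      hadd _ _ (negPart_nonneg x) (negPart_nonneg y)]
    ring
  have hd_mul (x y : ℝ) : d (x * y) = x * d y + y * d x := by
    have hx := posPart_sub_negPart x
    have hy := posPart_sub_negPart y
    have hxy : x * y = (x⁺ * y⁺ + x⁻ * y⁻) - (x⁺ * y⁻ + x⁻ * y⁺) := by
      linear_combination -y * hx - (x⁺ - x⁻) * hy
    rw [hd (by positivity) (by positivity) hxy, hadd _ _ (by positivity) (by positivity),
      hadd _ _ (by positivity) (by positivity), hL _ _ (posPart_nonneg x) (posPart_nonneg y),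
      hL _ _ (negPart_nonneg x) (negPart_nonneg y), hL _ _ (posPart_nonneg x) (negPart_nonneg y),
      hL _ _ (negPart_nonneg x) (posPart_nonneg y)]
    linear_combination (f y⁺ - f y⁻) * hx + (f x⁺ - f x⁻) * hy
  refine ⟨Derivation.mk' (AddMonoidHom.mk' d hd_add).toRatLinearMap hd_mul, fun x hx ↦ ?_⟩
  change f x = d x
  rw [hd hx le_rfl (sub_zero x).symm, hL.map_zero, sub_zero]

theorem IsSchurConcave.exists_eq_negMulLog_add_derivation (hf : IsSchurConcave f)
    (hL : IsLeibniz f) : ∃ c : ℝ, 0 ≤ c ∧ ∃ D : Derivation ℚ ℝ ℝ, ∀ x, 0 ≤ x →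
      f x = c * Real.negMulLog x + D x := by
  obtain ⟨c, hc, hnat⟩ := exists_map_natCast_eq_mul_negMulLog hf hL
  set g : ℝ → ℝ := fun x ↦ f x + -c * Real.negMulLog x
  have hg : IsLeibniz g := hL.add (isLeibniz_negMulLog.const_mul (-c))
  have hg_rat (r : ℚ) (hr : 0 < r) : g r = 0 :=
    hg.map_ratCast_eq_zero (fun n hn ↦ by simp [g, hnat n hn]) hr
  have hg_bin (x : ℝ) (hx : x ∈ Set.Ioo 0 1) : binarySum g x = 0 := by
    have h := binarySum_eq_mul_binEntropy hf (fun r hr ↦ by linarith [hg_rat r hr]) hx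
    rw [binarySum, Real.binEntropy_eq_negMulLog_add_negMulLog_one_sub] at h
    simp only [binarySum, g]
    linarith
  obtain ⟨D, hD⟩ := hg.exists_derivation fun x y ↦ hg.map_add_of_binarySum_eq_zero hg_bin
  exact ⟨c, hc, D, fun x hx ↦ by linarith [hD x hx]⟩

end RealLeibniz

section Classification

variable {Δ : ∀ n : ℕ, (Fin n → ℝ) → ℝ}

theorem exists_eq_entropy_add_derivation (hadd : IsAdditive Δ) (hanti : IsMajAntitone Δ)
    (hL : Leib1 Δ) : ∃ c : ℝ, 0 ≤ c ∧ ∃ D : Derivation ℚ ℝ ℝ, ∀ (n : ℕ) (p : Fin n → ℝ),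
      NonnegVec p → Δ n p = c * H1ent p + D (∑ i, p i) := by
  obtain ⟨c, hc, D, hD⟩ :=
    (hanti.isSchurConcave_singleton hadd).exists_eq_negMulLog_add_derivation hL.isLeibniz_singleton
  refine ⟨c, hc, D, fun n p hp ↦ ?_⟩
  simp only [hadd.eq_sum_singleton hp, hD _ (hp _), Finset.sum_add_distrib, ← Finset.mul_sum,
    H1ent_eq_sum_negMulLog, map_sum]

theorem exists_eq_sum_log (hadd : IsAdditive Δ) (hanti : IsMajAntitone Δ) (hL : Leib0 Δ) :
    ∃ c : ℝ, 0 ≤ c ∧ ∀ (n : ℕ) (p : Fin n → ℝ), NonnegVec p → Δ n p = c * H0' p := by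
  have hf := hanti.isSchurConcave_singleton hadd
  have hmul (x y : ℝ) (hx : 0 < x) (hy : 0 < y) := hL.singleton_mul hx hy
  obtain ⟨c, hc, hlog⟩ := exists_eq_mul_log_of_map_mul hmul fun t ↦ hf.nonneg_of_map_mul hmul
  refine ⟨c, hc, fun n p hp ↦ ?_⟩
  rw [hadd.eq_sum_singleton hp, H0'_eq_sum_log, Finset.mul_sum]
  refine Finset.sum_congr rfl fun i _ ↦ ?_
  rcases (hp i).eq_or_lt with h0 | hpos
  · simp [← h0, hL.singleton_zero]
  · exact hlog _ hpos

end Classification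

theorem classification_of_monotone_derivations_general :
    (∀ Δ : ∀ n : ℕ, (Fin n → ℝ) → ℝ, IsAdditive Δ → IsMajAntitone Δ → Leib1 Δ →
      ∃ c : ℝ, 0 ≤ c ∧ ∃ D : Derivation ℚ ℝ ℝ, ∀ (n : ℕ) (p : Fin n → ℝ), NonnegVec p →
        Δ n p = c * H1ent p + D (∑ i, p i)) ∧
    (∀ (c : ℝ) (D : Derivation ℚ ℝ ℝ), 0 ≤ c →
      DeltaBase (fun _ p ↦ c * H1ent p + D (∑ i, p i)) ∧
        Leib1 (fun _ p ↦ c * H1ent p + D (∑ i, p i))) ∧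
    (∀ Δ : ∀ n : ℕ, (Fin n → ℝ) → ℝ, IsAdditive Δ → IsMajAntitone Δ → Leib0 Δ →
      ∃ c : ℝ, 0 ≤ c ∧ ∀ (n : ℕ) (p : Fin n → ℝ), NonnegVec p → Δ n p = c * H0' p) ∧
    (∀ c : ℝ, 0 ≤ c →
      DeltaBase (fun _ p ↦ c * H0' p) ∧ Leib0 (fun _ p ↦ c * H0' p)) :=
  ⟨fun _ ↦ exists_eq_entropy_add_derivation,
    fun _ D hc ↦ deltaBase_leib1_entropy_add_derivation hc D,
    fun _ ↦ exists_eq_sum_log, fun _ ↦ deltaBase_leib0_sum_log⟩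

/-- **Classification of monotone derivations on the modified majorization
semiring.**  A monotone derivation at `‖·‖₁` is a nonnegative multiple of the
Shannon entropy `H₁` on all vectors of rational total sum, and a monotone
derivation at `‖·‖₀` is a nonnegative multiple of `H₀'` there; conversely
these multiples have all the listed properties. -/
theorem classification_of_monotone_derivations :
    (∀ Δ : ∀ n : ℕ, (Fin n → ℝ) → ℝ, DeltaBase Δ → Leib1 Δ →
      ∃ c : ℝ, 0 ≤ c ∧ ∀ (n : ℕ) (p : Fin n → ℝ), NonnegVec p →
        (∃ a : ℚ, (∑ i, p i) = a) → Δ n p = c * H1ent p) ∧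
    (∀ c : ℝ, 0 ≤ c →
      DeltaBase (fun n p => c * H1ent p) ∧ Leib1 (fun n p => c * H1ent p)) ∧
    (∀ Δ : ∀ n : ℕ, (Fin n → ℝ) → ℝ, DeltaBase Δ → Leib0 Δ →
      ∃ c : ℝ, 0 ≤ c ∧ ∀ (n : ℕ) (p : Fin n → ℝ), NonnegVec p →
        (∃ a : ℚ, (∑ i, p i) = a) → Δ n p = c * H0' p) ∧
    (∀ c : ℝ, 0 ≤ c →
      DeltaBase (fun n p => c * H0' p) ∧ Leib0 (fun n p => c * H0' p)) := by
  obtain ⟨entropy, entropy_conv, log, log_conv⟩ := classification_of_monotone_derivations_general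
  refine ⟨fun Δ hΔ hL ↦ ?_, fun c hc ↦ by simpa using entropy_conv c 0 hc, fun Δ hΔ hL ↦ ?_,
    log_conv⟩
  · obtain ⟨c, hc, D, hD⟩ := entropy Δ hΔ.2.2.1 hΔ.2.2.2 hL
    refine ⟨c, hc, fun n p hp ⟨a, ha⟩ ↦ ?_⟩
    rw [hD n p hp, ha, ← eq_ratCast (algebraMap ℚ ℝ), D.map_algebraMap, add_zero]
  · obtain ⟨c, hc, h⟩ := log Δ hΔ.2.2.1 hΔ.2.2.2 hL
    exact ⟨c, hc, fun n p hp _ ↦ h n p hp⟩
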